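/- arXiv:1208.3811 — 3 statements merged into one kernel-verified Lean document; each statement's English description precedes it below -/
import Mathlib

section
/- Let 𝒳 and 𝒲 be standard Borel spaces, R a probability measure on 𝒲, f : 𝒳 × 𝒲 → 𝒳 measurable, and let F_t : 𝒳 × 𝒲^t → 𝒳 be the t-step state transition maps. Suppose P_* is a nominal invariant state distribution, i.e. (P_* × R) ∘ f⁻¹ = P_*. Let Φ be a probability measure on 𝒳 with Φ ≪ P_*, and let κ be a Markov kernel from 𝒳 to 𝒲^t with κ(x) ≪ R^{⊗t} for Φ-almost every x. Let μ := Φ ⊗ κ be the joint measure on 𝒳 × 𝒲^t and P_t := μ ∘ F_t⁻¹. Then the relative entropy dissipation inequality holds: D(P_t ‖ P_*) ≤ D(Φ ‖ P_*) + ∫_𝒳 D(κ(x) ‖ R^{⊗t}) dΦ(x), with all quantities valued in [0,∞]. -/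
open MeasureTheory ProbabilityTheory
open scoped ENNReal ProbabilityTheory Classical

/-- Kullback-Leibler divergence `D(P ‖ Q)`, valued in `[0,∞]`.  For probability measures with
`P ≪ Q` it equals `∫ log (dP/dQ) dP`, computed here in the equivalent nonnegative form
`∫⁻ (φ log φ - φ + 1) dQ` where `φ = dP/dQ`; it is `∞` when `¬ P ≪ Q`. -/
noncomputable def klDiv {α : Type*} [MeasurableSpace α] (P Q : Measure α) : ℝ≥0∞ :=
  if P ≪ Q then
    ∫⁻ x, ENNReal.ofReal ((P.rnDeriv Q x).toReal * Real.log (P.rnDeriv Q x).toReal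
      - (P.rnDeriv Q x).toReal + 1) ∂Q
  else ∞

/-- The `t`-step state transition maps: `F 0 (x, _) = x` and
`F (k+1) (x, w₀, …, w_k) = f (F k (x, w₀, …, w_{k-1}), w_k)`. -/
def stateTrans {𝒳 𝒲 : Type*} (f : 𝒳 × 𝒲 → 𝒳) : (t : ℕ) → 𝒳 × (Fin t → 𝒲) → 𝒳
  | 0, p => p.1
  | t + 1, p => f (stateTrans f t (p.1, fun i => p.2 i.castSucc), p.2 (Fin.last t))

/-!
Each step preserves `P_*`, so `F_t` pushes `P_* × R^{⊗t}` forward to `P_*`. Hence `P_t` and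
`P_*` are the images of `Φ ⊗ κ` and `P_* × R^{⊗t}` under the same map, and data processing bounds
their divergence by that of the joint laws. The chain rule splits the latter into `D(Φ ‖ P_*)` and
a conditional divergence, which is the average of the fibrewise divergences `D(κ(x) ‖ R^{⊗t})`.
-/

open InformationTheory (klFun measurable_klFun)

section Kernel

variable {α β : Type*} {mα : MeasurableSpace α} {mβ : MeasurableSpace β}
  [MeasurableSpace.CountableOrCountablyGenerated α β]
  {μ : Measure α} {κ η : Kernel α β}

variable (κ η) in
lemma measurable_ofReal_klFun_kernel_rnDeriv :
    Measurable fun p : α × β ↦ ENNReal.ofReal (klFun (κ.rnDeriv η p.1 p.2).toReal) :=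
  (measurable_klFun.comp (Kernel.measurable_rnDeriv κ η).ennreal_toReal).ennreal_ofReal

variable [IsFiniteKernel κ] [IsFiniteKernel η]

lemma compProd_withDensity_kernel_rnDeriv [SFinite μ] (h : ∀ᵐ a ∂μ, κ a ≪ η a) :
    (μ ⊗ₘ η).withDensity (fun p ↦ κ.rnDeriv η p.1 p.2) = μ ⊗ₘ κ := by
  rw [← Measure.compProd_withDensity (Kernel.measurable_rnDeriv κ η)]
  exact Measure.compProd_congr (h.mono fun _ ↦ Kernel.withDensity_rnDeriv_eq)

lemma rnDeriv_compProd_right [IsFiniteMeasure μ] (h : ∀ᵐ a ∂μ, κ a ≪ η a) :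
    (μ ⊗ₘ κ).rnDeriv (μ ⊗ₘ η) =ᵐ[μ ⊗ₘ η] fun p ↦ κ.rnDeriv η p.1 p.2 := by
  rw [← compProd_withDensity_kernel_rnDeriv h]
  exact Measure.rnDeriv_withDensity _ (Kernel.measurable_rnDeriv κ η)

lemma klDiv_apply_eq_lintegral_klFun_kernel_rnDeriv {a : α} (h : κ a ≪ η a) :
    InformationTheory.klDiv (κ a) (η a)
      = ∫⁻ b, ENNReal.ofReal (klFun (κ.rnDeriv η a b).toReal) ∂η a := by
  rw [InformationTheory.klDiv_eq_lintegral_klFun_of_ac h]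
  refine lintegral_congr_ae ?_
  filter_upwards [Kernel.rnDeriv_eq_rnDeriv_measure (κ := κ) (η := η)] with b hb
  rw [hb]

variable (κ η) in
lemma measurable_klDiv_apply : Measurable fun a ↦ InformationTheory.klDiv (κ a) (η a) := by
  have h_ite : (fun a ↦ InformationTheory.klDiv (κ a) (η a)) = fun a ↦ if κ a ≪ η a then
      ∫⁻ b, ENNReal.ofReal (klFun (κ.rnDeriv η a b).toReal) ∂η a else ∞ := by
    ext a
    split_ifs with h
    · exact klDiv_apply_eq_lintegral_klFun_kernel_rnDeriv h
    · exact InformationTheory.klDiv_of_not_ac h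
  rw [h_ite]
  exact Measurable.ite (Kernel.measurableSet_absolutelyContinuous κ η)
    (measurable_ofReal_klFun_kernel_rnDeriv κ η).lintegral_kernel_prod_right' measurable_const

variable (μ κ η) in
lemma klDiv_compProd_right_eq_lintegral [IsFiniteMeasure μ] :
    InformationTheory.klDiv (μ ⊗ₘ κ) (μ ⊗ₘ η)
      = ∫⁻ a, InformationTheory.klDiv (κ a) (η a) ∂μ := by
  by_cases h : ∀ᵐ a ∂μ, κ a ≪ η a
  · calc InformationTheory.klDiv (μ ⊗ₘ κ) (μ ⊗ₘ η)
        = ∫⁻ p, ENNReal.ofReal (klFun ((μ ⊗ₘ κ).rnDeriv (μ ⊗ₘ η) p).toReal) ∂(μ ⊗ₘ η) :=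
          InformationTheory.klDiv_eq_lintegral_klFun_of_ac (.compProd_right h)
      _ = ∫⁻ p, ENNReal.ofReal (klFun (κ.rnDeriv η p.1 p.2).toReal) ∂(μ ⊗ₘ η) :=
          lintegral_congr_ae ((rnDeriv_compProd_right h).mono fun p hp ↦ by simp only [hp])
      _ = ∫⁻ a, ∫⁻ b, ENNReal.ofReal (klFun (κ.rnDeriv η a b).toReal) ∂η a ∂μ :=
          Measure.lintegral_compProd (measurable_ofReal_klFun_kernel_rnDeriv κ η)
      _ = ∫⁻ a, InformationTheory.klDiv (κ a) (η a) ∂μ :=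
          lintegral_congr_ae
            (h.mono fun _ ha ↦ (klDiv_apply_eq_lintegral_klFun_kernel_rnDeriv ha).symm)
  · have h_lintegral : ∫⁻ a, InformationTheory.klDiv (κ a) (η a) ∂μ = ∞ := by
      contrapose! h
      exact (ae_lt_top (measurable_klDiv_apply κ η) h).mono fun _ ha ↦
        (InformationTheory.klDiv_ne_top_iff.mp ha.ne).1
    rw [h_lintegral, InformationTheory.klDiv_of_not_ac fun hac ↦ h hac.kernel_of_compProd]

end Kernel

lemma klDiv_eq_informationTheory_klDiv {α : Type*} [MeasurableSpace α] (P Q : Measure α)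
    [IsFiniteMeasure P] [IsFiniteMeasure Q] : klDiv P Q = InformationTheory.klDiv P Q := by
  simp only [klDiv, InformationTheory.klDiv_eq_lintegral_klFun, InformationTheory.klFun_apply,
    add_sub_right_comm]

lemma measurePreserving_init_last {n : ℕ} {α : Type*} [MeasurableSpace α]
    (μ : Fin (n + 1) → Measure α) [∀ i, SigmaFinite (μ i)] :
    MeasurePreserving (fun w : Fin (n + 1) → α ↦ (Fin.init w, w (Fin.last n)))
      (Measure.pi μ) ((Measure.pi fun i ↦ μ i.castSucc).prod (μ (Fin.last n))) := by
  have h := Measure.measurePreserving_swap.comp (measurePreserving_piFinSuccAbove μ (Fin.last n))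
  simp only [Fin.succAbove_last] at h
  convert h using 1
  ext w <;> simp [MeasurableEquiv.piFinSuccAbove, Fin.insertNthEquiv, Fin.init]

lemma measurePreserving_stateTrans {𝒳 𝒲 : Type*} [MeasurableSpace 𝒳] [MeasurableSpace 𝒲]
    {R : Measure 𝒲} [IsProbabilityMeasure R] {f : 𝒳 × 𝒲 → 𝒳} {P : Measure 𝒳} [SFinite P]
    (h : MeasurePreserving f (P.prod R) P) (t : ℕ) :
    MeasurePreserving (stateTrans f t) (P.prod (Measure.pi fun _ ↦ R)) P := by
  induction t with
  | zero => exact measurePreserving_fst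
  | succ t ih =>
    have h_split : MeasurePreserving
        (fun p : 𝒳 × (Fin (t + 1) → 𝒲) ↦ ((p.1, Fin.init p.2), p.2 (Fin.last t)))
        (P.prod (Measure.pi fun _ ↦ R)) ((P.prod (Measure.pi fun _ ↦ R)).prod R) :=
      (measurePreserving_prodAssoc P _ R).symm.comp
        ((MeasurePreserving.id P).prod (measurePreserving_init_last fun _ ↦ R))
    exact h.comp ((ih.prod (MeasurePreserving.id R)).comp h_split)

theorem dissipation_inequality_general
    {𝒳 𝒲 : Type*} [MeasurableSpace 𝒳] [MeasurableSpace 𝒲]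
    (R : Measure 𝒲) [IsProbabilityMeasure R]
    (f : 𝒳 × 𝒲 → 𝒳) (hf : Measurable f)
    (Pstar : Measure 𝒳) [IsFiniteMeasure Pstar]
    (hinv : (Pstar.prod R).map f = Pstar)
    (t : ℕ) [MeasurableSpace.CountableOrCountablyGenerated 𝒳 (Fin t → 𝒲)]
    (Φ : Measure 𝒳) [IsFiniteMeasure Φ]
    (κ : Kernel 𝒳 (Fin t → 𝒲)) [IsMarkovKernel κ] :
    klDiv ((Φ ⊗ₘ κ).map (stateTrans f t)) Pstar
      ≤ klDiv Φ Pstar + ∫⁻ x, klDiv (κ x) (Measure.pi fun _ => R) ∂Φ := by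
  have hF : MeasurePreserving (stateTrans f t) (Pstar.prod (Measure.pi fun _ ↦ R)) Pstar :=
    measurePreserving_stateTrans ⟨hf, hinv⟩ t
  let η : Kernel 𝒳 (Fin t → 𝒲) := Kernel.const 𝒳 (Measure.pi fun _ ↦ R)
  simp only [klDiv_eq_informationTheory_klDiv]
  calc InformationTheory.klDiv ((Φ ⊗ₘ κ).map (stateTrans f t)) Pstar
      = InformationTheory.klDiv ((Φ ⊗ₘ κ).map (stateTrans f t))
          ((Pstar ⊗ₘ η).map (stateTrans f t)) := by
        rw [Measure.compProd_const, hF.map_eq]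
    _ ≤ InformationTheory.klDiv (Φ ⊗ₘ κ) (Pstar ⊗ₘ η) :=
        InformationTheory.klDiv_map_le _ _ hF.measurable
    _ = InformationTheory.klDiv Φ Pstar + InformationTheory.klDiv (Φ ⊗ₘ κ) (Φ ⊗ₘ η) :=
        InformationTheory.klDiv_compProd_eq_add Φ Pstar κ η
    _ = InformationTheory.klDiv Φ Pstar
          + ∫⁻ x, InformationTheory.klDiv (κ x) (Measure.pi fun _ ↦ R) ∂Φ :=
        congrArg _ (klDiv_compProd_right_eq_lintegral Φ κ η)

/-- Relative entropy dissipation inequality: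
`D(P_t ‖ P_*) ≤ D(Φ ‖ P_*) + ∫ D(κ(x) ‖ R^{⊗t}) dΦ(x)`. -/
theorem dissipation_inequality
    {𝒳 𝒲 : Type*} [MeasurableSpace 𝒳] [StandardBorelSpace 𝒳]
    [MeasurableSpace 𝒲] [StandardBorelSpace 𝒲]
    (R : Measure 𝒲) [IsProbabilityMeasure R]
    (f : 𝒳 × 𝒲 → 𝒳) (hf : Measurable f)
    (Pstar : Measure 𝒳) [IsProbabilityMeasure Pstar]
    (hinv : (Pstar.prod R).map f = Pstar)
    (t : ℕ)
    (Φ : Measure 𝒳) [IsProbabilityMeasure Φ] (hΦ : Φ ≪ Pstar)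
    (κ : Kernel 𝒳 (Fin t → 𝒲)) [IsMarkovKernel κ]
    (hκ : ∀ᵐ x ∂Φ, κ x ≪ Measure.pi fun _ => R) :
    klDiv ((Φ ⊗ₘ κ).map (stateTrans f t)) Pstar
      ≤ klDiv Φ Pstar + ∫⁻ x, klDiv (κ x) (Measure.pi fun _ => R) ∂Φ :=
  dissipation_inequality_general R f hf Pstar hinv t Φ κ
end

section
/- Consider the linear system X_{k+1} = A X_k + B W_k on ℝⁿ with noise values in ℝ^m, where A ∈ ℝ^{n×n} and B ∈ ℝ^{n×m}, and nominal noise marginal R := N(0, I_m). Fix a time horizon t ≥ n. Then the following are equivalent: (i) the pair (A, B) is reachable, i.e. the matrix [B, AB, …, A^{n-1}B] has rank n; (ii) for every α, β ∈ ℝⁿ and every pair of positive definite symmetric matrices Σ, Θ ∈ ℝ^{n×n}, there exists a Gaussian probability measure Q on ℝⁿ × (ℝ^m)^t whose marginal on the first factor is N(α, Σ), such that Q ≪ N(α, Σ) × (N(0, I_m))^{⊗t}, and such that the pushforward of Q under the t-step transition map (x, w_0, …, w_{t-1}) ↦ A^t x + Σ_{s=0}^{t-1} A^{t-1-s} B w_s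 equals N(β, Θ). -/
open MeasureTheory ProbabilityTheory Matrix
open scoped ENNReal ProbabilityTheory Classical

/-- The Gaussian (multivariate normal) measure `N(a, C)` on `ℝ^r`, with mean vector `a` and
positive definite covariance matrix `C`, given by its density
`(2π)^{-r/2} (det C)^{-1/2} exp(-½ (x-a)ᵀ C⁻¹ (x-a))` with respect to Lebesgue measure. -/
noncomputable def gaussianPi {r : ℕ} (a : Fin r → ℝ) (C : Matrix (Fin r) (Fin r) ℝ) :
    Measure (Fin r → ℝ) :=
  volume.withDensity fun x =>
    ENNReal.ofReal (Real.sqrt (((2 * Real.pi) ^ r * C.det)⁻¹) *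
      Real.exp (-(1 / 2) * ((x - a) ⬝ᵥ (C⁻¹ *ᵥ (x - a)))))

/-- The pair `(A, B)` is reachable: the controllability matrix
`[B, AB, …, A^{n-1}B]` has rank `n`. -/
def IsReachablePair {n m : ℕ} (A : Matrix (Fin n) (Fin n) ℝ)
    (B : Matrix (Fin n) (Fin m) ℝ) : Prop :=
  (Matrix.of fun (i : Fin n) (p : Fin n × Fin m) => (A ^ (p.1 : ℕ) * B) i p.2).rank = n

/-- A measure on a real normed space is Gaussian if every continuous linear functional pushes it
forward to a (possibly degenerate) one-dimensional normal distribution. -/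
def IsGaussianMeasure {E : Type*} [NormedAddCommGroup E] [NormedSpace ℝ E] [MeasurableSpace E]
    (μ : Measure E) : Prop :=
  ∀ L : E →L[ℝ] ℝ, ∃ (c : ℝ) (v : NNReal), μ.map L = gaussianReal c v

/-!
If `G` denotes the linear map from noise sequences to terminal states, then under any admissible
`Q` the terminal mean is `A ^ t` times the initial mean plus `G` applied to the mean noise. So when
every `N(β, I)` can be reached from `N(0, I)`, the map `G` is onto, which for `t ≥ n` is the rank
condition, by the Cayley–Hamilton theorem.

Conversely, let `S` be a right inverse of `G`. Draw the initial state `x`, a target `y ∼ N(β, Θ)`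
and the nominal noise `w` independently, and use the noise `v = w + S (y - (A ^ t x + G w))`.
Then `A ^ t x + G v = y`, and `(x, v)` is a surjective linear image of a nonsingular Gaussian
vector, so its law is Gaussian and absolutely continuous with respect to Lebesgue measure.
-/

section ProductMeasures

variable {ι : Type*} {E : ι → Type*} [∀ i, MeasurableSpace (E i)]

lemma lmarginal_prod [DecidableEq ι] (μ : ∀ i, Measure (E i)) [∀ i, SigmaFinite (μ i)]
    {f : ∀ i, E i → ℝ≥0∞} (hf : ∀ i, Measurable (f i)) (s : Finset ι) (x : ∀ i, E i) :
    (∫⋯∫⁻_s, (fun y ↦ ∏ i ∈ s, f i (y i)) ∂μ) x = ∏ i ∈ s, ∫⁻ y, f i y ∂μ i := by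
  induction s using Finset.induction generalizing x with
  | empty => simp
  | insert i s hi ih =>
    have hprod : ∀ t : Finset ι, Measurable fun y : ∀ i, E i ↦ ∏ j ∈ t, f j (y j) := fun t ↦
      Finset.measurable_prod t fun j _ ↦ (hf j).comp (measurable_pi_apply j)
    have integrate_i (y : ∀ i, E i) :
        ∫⁻ z, ∏ j ∈ insert i s, f j (Function.update y i z j) ∂μ i =
          (∫⁻ z, f i z ∂μ i) * ∏ j ∈ s, f j (y j) := by
      rw [← lintegral_mul_const _ (hf i)]
      refine lintegral_congr fun z ↦ ?_
      rw [Finset.prod_insert hi, Function.update_self]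
      congr 1
      refine Finset.prod_congr rfl fun j hj ↦ ?_
      rw [Function.update_of_ne (ne_of_mem_of_not_mem hj hi)]
    rw [lmarginal_insert' _ (hprod _) hi, Finset.prod_insert hi, ← ih x]
    simp only [integrate_i, lmarginal]
    exact lintegral_const_mul _ ((hprod s).comp measurable_updateFinset)

variable [Fintype ι]

lemma lintegral_pi_prod (μ : ∀ i, Measure (E i)) [∀ i, SigmaFinite (μ i)]
    {f : ∀ i, E i → ℝ≥0∞} (hf : ∀ i, Measurable (f i)) :
    ∫⁻ x, ∏ i, f i (x i) ∂Measure.pi μ = ∏ i, ∫⁻ x, f i x ∂μ i := by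
  rcases isEmpty_or_nonempty (∀ i, E i) with hE | ⟨⟨x⟩⟩
  · obtain ⟨i, hi⟩ := isEmpty_pi.mp hE
    rw [lintegral_of_isEmpty, Finset.prod_eq_zero (Finset.mem_univ i) (lintegral_of_isEmpty _ _)]
  · rw [lintegral_eq_lmarginal_univ x, lmarginal_prod μ hf]

lemma pi_withDensity (μ : ∀ i, Measure (E i)) [∀ i, SigmaFinite (μ i)]
    {f : ∀ i, E i → ℝ≥0∞} (hf : ∀ i, Measurable (f i))
    [∀ i, SigmaFinite ((μ i).withDensity (f i))] :
    Measure.pi (fun i ↦ (μ i).withDensity (f i)) =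
      (Measure.pi μ).withDensity fun x ↦ ∏ i, f i (x i) := by
  refine Measure.pi_eq fun s hs ↦ ?_
  rw [withDensity_apply _ (MeasurableSet.univ_pi hs), Measure.restrict_pi_pi,
    lintegral_pi_prod _ hf]
  exact Finset.prod_congr rfl fun i _ ↦ (withDensity_apply _ (hs i)).symm

lemma absolutelyContinuous_pi {μ ν : ∀ i, Measure (E i)} [∀ i, SigmaFinite (μ i)]
    [∀ i, SigmaFinite (ν i)] (h : ∀ i, μ i ≪ ν i) : Measure.pi μ ≪ Measure.pi ν := by
  have hμ (i : ι) : (ν i).withDensity ((μ i).rnDeriv (ν i)) = μ i :=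
    Measure.withDensity_rnDeriv_eq _ _ (h i)
  have (i : ι) : SigmaFinite ((ν i).withDensity ((μ i).rnDeriv (ν i))) := by
    rw [hμ i]; infer_instance
  have hpi : Measure.pi μ =
      (Measure.pi ν).withDensity fun x ↦ ∏ i, (μ i).rnDeriv (ν i) (x i) := by
    rw [← pi_withDensity ν fun i ↦ Measure.measurable_rnDeriv _ _]
    simp_rw [hμ]
  rw [hpi]
  exact withDensity_absolutelyContinuous _ _

end ProductMeasures

lemma map_withDensity_comp {α β : Type*} [MeasurableSpace α] [MeasurableSpace β] (μ : Measure α)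
    {T : α → β} (hT : Measurable T) {g : β → ℝ≥0∞} (hg : Measurable g) :
    (μ.withDensity (g ∘ T)).map T = (μ.map T).withDensity g := by
  ext s hs
  rw [Measure.map_apply hT hs, withDensity_apply _ (hT hs), withDensity_apply _ hs,
    setLIntegral_map hs hg hT]
  rfl

lemma isGaussian_pi {ι : Type*} [Fintype ι] {E : ι → Type*} [∀ i, NormedAddCommGroup (E i)]
    [∀ i, NormedSpace ℝ (E i)] [∀ i, MeasurableSpace (E i)] [∀ i, BorelSpace (E i)]
    [∀ i, SecondCountableTopology (E i)] [∀ i, CompleteSpace (E i)]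
    (μ : ∀ i, Measure (E i)) [∀ i, IsGaussian (μ i)] : IsGaussian (Measure.pi μ) := by
  have coordinates_gaussian (i : ι) : HasGaussianLaw (fun x : ∀ i, E i ↦ x i) (Measure.pi μ) :=
    ((measurePreserving_eval μ i).hasLaw).hasGaussianLaw
  have coordinates_indep : iIndepFun (fun i (x : ∀ i, E i) ↦ x i) (Measure.pi μ) :=
    iIndepFun_pi (X := fun _ ↦ id) fun _ ↦ aemeasurable_id
  simpa using (coordinates_indep.hasGaussianLaw coordinates_gaussian).isGaussian_map

section Gaussian

variable {r : ℕ}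

/-- The density of the Gaussian measure `gaussianPi a C` with respect to Lebesgue measure. -/
noncomputable def gaussianPiPDF (a : Fin r → ℝ) (C : Matrix (Fin r) (Fin r) ℝ) (x : Fin r → ℝ) :
    ℝ≥0∞ :=
  ENNReal.ofReal (Real.sqrt (((2 * Real.pi) ^ r * C.det)⁻¹) *
    Real.exp (-(1 / 2) * ((x - a) ⬝ᵥ (C⁻¹ *ᵥ (x - a)))))

lemma gaussianPi_eq_withDensity (a : Fin r → ℝ) (C : Matrix (Fin r) (Fin r) ℝ) :
    gaussianPi a C = volume.withDensity (gaussianPiPDF a C) := rfl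

lemma measurable_gaussianPiPDF (a : Fin r → ℝ) (C : Matrix (Fin r) (Fin r) ℝ) :
    Measurable (gaussianPiPDF a C) := by
  unfold gaussianPiPDF
  exact (ENNReal.continuous_ofReal.comp (by fun_prop)).measurable

lemma gaussianPiPDF_pos (a : Fin r → ℝ) {C : Matrix (Fin r) (Fin r) ℝ} (hC : 0 < C.det)
    (x : Fin r → ℝ) : 0 < gaussianPiPDF a C x :=
  ENNReal.ofReal_pos.mpr (by positivity)

lemma gaussianPi_absolutelyContinuous_volume (a : Fin r → ℝ) (C : Matrix (Fin r) (Fin r) ℝ) :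
    gaussianPi a C ≪ volume :=
  withDensity_absolutelyContinuous _ _

lemma volume_absolutelyContinuous_gaussianPi (a : Fin r → ℝ) {C : Matrix (Fin r) (Fin r) ℝ}
    (hC : 0 < C.det) : volume ≪ gaussianPi a C :=
  withDensity_absolutelyContinuous' (measurable_gaussianPiPDF a C).aemeasurable
    (.of_forall fun x ↦ (gaussianPiPDF_pos a hC x).ne')

lemma gaussianPiPDF_zero_one (x : Fin r → ℝ) :
    gaussianPiPDF 0 1 x = ∏ i, gaussianPDF 0 1 (x i) := by
  have normalization :
      Real.sqrt ((2 * Real.pi) ^ r)⁻¹ = ∏ _i : Fin r, (Real.sqrt (2 * Real.pi))⁻¹ := by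
    simp_rw [← Real.sqrt_inv]
    rw [← Real.sqrt_prod _ fun i _ ↦ by positivity, Finset.prod_const, Finset.card_fin, inv_pow]
  have exponent : -(1 / 2) * (x ⬝ᵥ x) = ∑ i, -(x i) ^ 2 / 2 := by
    rw [dotProduct, Finset.mul_sum]
    exact Finset.sum_congr rfl fun i _ ↦ by ring
  simp only [gaussianPiPDF, gaussianPDF, gaussianPDFReal]
  rw [← ENNReal.ofReal_prod_of_nonneg fun i _ ↦ by positivity, Finset.prod_mul_distrib,
    ← Real.exp_sum]
  simp only [sub_zero, inv_one, one_mulVec, det_one, mul_one, NNReal.coe_one, normalization,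
    exponent]

lemma gaussianPi_zero_one :
    gaussianPi (0 : Fin r → ℝ) 1 = Measure.pi fun _ ↦ gaussianReal 0 1 := by
  have gaussianReal_eq : gaussianReal 0 1 = volume.withDensity (gaussianPDF 0 1) :=
    gaussianReal_of_var_ne_zero 0 one_ne_zero
  have : SigmaFinite ((volume : Measure ℝ).withDensity (gaussianPDF 0 1)) := by
    rw [← gaussianReal_eq]; infer_instance
  rw [gaussianReal_eq, pi_withDensity _ fun _ ↦ measurable_gaussianPDF 0 1, ← volume_pi,
    gaussianPi_eq_withDensity, funext gaussianPiPDF_zero_one]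

lemma abs_det_mul_gaussianPiPDF (a : Fin r → ℝ) {M : Matrix (Fin r) (Fin r) ℝ} (hM : M.det ≠ 0)
    (x : Fin r → ℝ) :
    ENNReal.ofReal |M.det| * gaussianPiPDF a (M * Mᵀ) (M *ᵥ x + a) = gaussianPiPDF 0 1 x := by
  have quadratic_form : (M *ᵥ x) ⬝ᵥ ((M * Mᵀ)⁻¹ *ᵥ (M *ᵥ x)) = x ⬝ᵥ x := by
    rw [Matrix.mul_inv_rev, mulVec_mulVec, Matrix.mul_assoc, nonsing_inv_mul _ hM.isUnit,
      Matrix.mul_one, ← transpose_nonsing_inv, dotProduct_mulVec, vecMul_transpose, mulVec_mulVec,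
      nonsing_inv_mul _ hM.isUnit, one_mulVec]
  have normalization : |M.det| * Real.sqrt (((2 * Real.pi) ^ r * (M * Mᵀ).det)⁻¹) =
      Real.sqrt ((2 * Real.pi) ^ r)⁻¹ := by
    have : |M.det| ≠ 0 := abs_ne_zero.mpr hM
    rw [det_mul, det_transpose, Real.sqrt_inv, Real.sqrt_inv, Real.sqrt_mul (by positivity),
      Real.sqrt_mul_self_eq_abs]
    field_simp
  simp only [gaussianPiPDF]
  rw [← ENNReal.ofReal_mul (abs_nonneg _), ← mul_assoc, normalization, add_sub_cancel_right,
    quadratic_form]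
  simp

lemma map_mulVec_add_volume (a : Fin r → ℝ) {M : Matrix (Fin r) (Fin r) ℝ} (hM : M.det ≠ 0) :
    (volume : Measure (Fin r → ℝ)).map (fun x ↦ M *ᵥ x + a) =
      ENNReal.ofReal |M.det⁻¹| • volume := by
  have hcomp : (fun x : Fin r → ℝ ↦ M *ᵥ x + a) = (· + a) ∘ toLin' M := by
    ext; simp
  rw [hcomp, ← Measure.map_map (by fun_prop) (toLin' M).continuous_of_finiteDimensional.measurable,
    Real.map_matrix_volume_pi_eq_smul_volume_pi hM, Measure.map_smul, map_add_right_eq_self]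

lemma map_mulVec_add_gaussianPi_zero_one (a : Fin r → ℝ) {M : Matrix (Fin r) (Fin r) ℝ}
    (hM : M.det ≠ 0) :
    (gaussianPi 0 1).map (fun x ↦ M *ᵥ x + a) = gaussianPi a (M * Mᵀ) := by
  set c := ENNReal.ofReal |M.det|
  have hc : c * ENNReal.ofReal |M.det⁻¹| = 1 := by
    rw [← ENNReal.ofReal_mul (abs_nonneg _), ← abs_mul, mul_inv_cancel₀ hM, abs_one,
      ENNReal.ofReal_one]
  have hT : Measurable fun x : Fin r → ℝ ↦ M *ᵥ x + a :=
    Continuous.measurable (by fun_prop)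
  have hg := measurable_gaussianPiPDF a (M * Mᵀ)
  have density_eq : gaussianPiPDF 0 1 = c • (gaussianPiPDF a (M * Mᵀ) ∘ (M *ᵥ · + a)) :=
    funext fun x ↦ (abs_det_mul_gaussianPiPDF a hM x).symm
  rw [gaussianPi_eq_withDensity, density_eq, withDensity_smul _ (hg.comp hT), Measure.map_smul,
    map_withDensity_comp _ hT hg, map_mulVec_add_volume a hM, withDensity_smul_measure,
    smul_smul, hc, one_smul, gaussianPi_eq_withDensity]

open scoped MatrixOrder in
lemma exists_eq_map_gaussianPi_zero_one (a : Fin r → ℝ) {C : Matrix (Fin r) (Fin r) ℝ}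
    (hC : C.PosDef) :
    ∃ M : Matrix (Fin r) (Fin r) ℝ, gaussianPi a C = (gaussianPi 0 1).map (M *ᵥ · + a) := by
  obtain ⟨M, hM, rfl⟩ :=
    CStarAlgebra.isStrictlyPositive_iff_eq_mul_star_self.mp hC.isStrictlyPositive
  refine ⟨M, ?_⟩
  rw [map_mulVec_add_gaussianPi_zero_one a ((isUnit_iff_isUnit_det M).mp hM).ne_zero,
    star_eq_conjTranspose, conjTranspose_eq_transpose_of_trivial]

lemma isGaussian_gaussianPi (a : Fin r → ℝ) {C : Matrix (Fin r) (Fin r) ℝ} (hC : C.PosDef) :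
    IsGaussian (gaussianPi a C) := by
  obtain ⟨M, hM⟩ := exists_eq_map_gaussianPi_zero_one a hC
  have hcomp : (M *ᵥ · + a) = (· + a) ∘ M.mulVecLin.toContinuousLinearMap := rfl
  have : IsGaussian (gaussianPi (0 : Fin r → ℝ) 1) := by
    rw [gaussianPi_zero_one]; exact isGaussian_pi _
  rw [hM, hcomp, ← Measure.map_map (by fun_prop) (by fun_prop)]
  infer_instance

lemma integral_id_gaussianPi_zero_one : ∫ x, x ∂gaussianPi (0 : Fin r → ℝ) 1 = 0 := by
  have : IsGaussian (gaussianPi (0 : Fin r → ℝ) 1) := isGaussian_gaussianPi 0 PosDef.one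
  have hint : Integrable (fun x ↦ x) (gaussianPi (0 : Fin r → ℝ) 1) := IsGaussian.integrable_id
  ext i
  rw [eval_integral hint.eval, gaussianPi_zero_one, integral_eval, integral_id_gaussianReal,
    Pi.zero_apply]

lemma integral_id_gaussianPi (a : Fin r → ℝ) {C : Matrix (Fin r) (Fin r) ℝ} (hC : C.PosDef) :
    ∫ x, x ∂gaussianPi a C = a := by
  obtain ⟨M, hM⟩ := exists_eq_map_gaussianPi_zero_one a hC
  have : IsGaussian (gaussianPi (0 : Fin r → ℝ) 1) := isGaussian_gaussianPi 0 PosDef.one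
  have hint : Integrable (fun x ↦ x) (gaussianPi (0 : Fin r → ℝ) 1) := IsGaussian.integrable_id
  let L := M.mulVecLin.toContinuousLinearMap
  calc ∫ x, x ∂gaussianPi a C
      = ∫ x, (L x + a) ∂gaussianPi 0 1 := by
        rw [hM, integral_map (Continuous.aemeasurable (by fun_prop)) (by fun_prop)]; rfl
    _ = L (∫ x, x ∂gaussianPi 0 1) + a := by
        rw [integral_add (L.integrable_comp hint) (integrable_const _),
          L.integral_comp_comm hint, integral_const, probReal_univ, one_smul]
    _ = a := by rw [integral_id_gaussianPi_zero_one, map_zero, zero_add]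

end Gaussian

lemma isGaussianMeasure_iff_isGaussian {E : Type*} [NormedAddCommGroup E] [NormedSpace ℝ E]
    [MeasurableSpace E] [BorelSpace E] {μ : Measure E} :
    IsGaussianMeasure μ ↔ IsGaussian μ :=
  ⟨fun h ↦ isGaussian_of_map_eq_gaussianReal h, fun _ L ↦ ⟨_, _, IsGaussian.map_eq_gaussianReal L⟩⟩

section Reachability

variable {ι κ K : Type*} [Fintype ι] [DecidableEq ι] [Fintype κ]

lemma pow_mem_span_pow_lt_card [CommRing K] [Nontrivial K] (A : Matrix ι ι K) (k : ℕ) :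
    A ^ k ∈ Submodule.span K (Set.range fun i : Fin (Fintype.card ι) ↦ A ^ (i : ℕ)) := by
  have adjoin_eq := Submodule.span_range_natDegree_eq_adjoin A.charpoly_monic A.aeval_self_charpoly
  rw [A.charpoly_natDegree_eq_dim, @Finset.coe_image] at adjoin_eq
  have hrange : (Set.range fun i : Fin (Fintype.card ι) ↦ A ^ (i : ℕ)) =
      (A ^ ·) '' (Finset.range (Fintype.card ι) : Set ℕ) := by
    ext; simp [Fin.exists_iff]
  rw [hrange, adjoin_eq, Subalgebra.mem_toSubmodule]
  exact pow_mem (Algebra.self_mem_adjoin_singleton K A) k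

/-- The subspace of states which the system `x ↦ A x + B w` can reach from the origin in `t`
steps, i.e. the sum of the ranges of `B, AB, …, A^{t-1}B`. -/
def reachableSubspace [CommSemiring K] (A : Matrix ι ι K) (B : Matrix ι κ K) (t : ℕ) :
    Submodule K (ι → K) :=
  ⨆ k : Fin t, LinearMap.range (A ^ (k : ℕ) * B).mulVecLin

/-- The map sending an input sequence `w₀, …, w_{t-1}` to the state at time `t` of the system
`x ↦ A x + B w` started at the origin. -/
def noiseMap [CommSemiring K] (A : Matrix ι ι K) (B : Matrix ι κ K) (t : ℕ) :
    (Fin t → κ → K) →ₗ[K] (ι → K) :=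
  ∑ s : Fin t, (A ^ (t - 1 - (s : ℕ)) * B).mulVecLin ∘ₗ LinearMap.proj s

lemma noiseMap_apply [CommSemiring K] (A : Matrix ι ι K) (B : Matrix ι κ K) (t : ℕ)
    (w : Fin t → κ → K) :
    noiseMap A B t w = ∑ s : Fin t, (A ^ (t - 1 - (s : ℕ)) * B) *ᵥ w s := by
  simp [noiseMap]

lemma range_noiseMap [CommSemiring K] (A : Matrix ι ι K) (B : Matrix ι κ K) (t : ℕ) :
    LinearMap.range (noiseMap A B t) = reachableSubspace A B t := by
  have reverse : reachableSubspace A B t =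
      ⨆ s : Fin t, LinearMap.range (A ^ (t - 1 - (s : ℕ)) * B).mulVecLin := by
    rw [reachableSubspace, ← Equiv.iSup_comp Fin.revPerm]
    simp [Fin.val_rev, Nat.sub_add_eq, Nat.sub_right_comm]
  rw [reverse]
  refine le_antisymm ?_ (iSup_le fun s ↦ ?_)
  · rintro _ ⟨w, rfl⟩
    rw [noiseMap_apply]
    exact sum_mem fun s _ ↦ Submodule.mem_iSup_of_mem s ⟨w s, rfl⟩
  · rintro _ ⟨u, rfl⟩
    refine ⟨Pi.single s u, ?_⟩
    rw [noiseMap_apply, Finset.sum_eq_single s (fun r _ hr ↦ by simp [hr]) (by simp)]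
    simp

lemma reachableSubspace_eq_of_card_le [CommRing K] [Nontrivial K] (A : Matrix ι ι K)
    (B : Matrix ι κ K) {t : ℕ} (ht : Fintype.card ι ≤ t) :
    reachableSubspace A B t = reachableSubspace A B (Fintype.card ι) := by
  refine le_antisymm (iSup_le fun k ↦ ?_) (iSup_le fun k ↦ ?_)
  · rintro _ ⟨u, rfl⟩
    obtain ⟨c, hc⟩ := (Submodule.mem_span_range_iff_exists_fun K).mp (pow_mem_span_pow_lt_card A k)
    rw [← hc, mulVecLin_apply, Matrix.sum_mul, sum_mulVec]
    refine sum_mem fun i _ ↦ ?_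
    rw [smul_mul, smul_mulVec]
    exact Submodule.smul_mem _ _ (Submodule.mem_iSup_of_mem i ⟨u, rfl⟩)
  · exact le_iSup_of_le (Fin.castLE ht k) le_rfl

lemma isReachablePair_iff_reachableSubspace_eq_top {n m : ℕ} (A : Matrix (Fin n) (Fin n) ℝ)
    (B : Matrix (Fin n) (Fin m) ℝ) : IsReachablePair A B ↔ reachableSubspace A B n = ⊤ := by
  have range_eq : LinearMap.range (Matrix.of fun (i : Fin n) (p : Fin n × Fin m) ↦
      (A ^ (p.1 : ℕ) * B) i p.2).mulVecLin = reachableSubspace A B n := by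
    simp only [reachableSubspace, range_mulVecLin, Submodule.span_range_eq_iSup, iSup_prod]
    rfl
  rw [IsReachablePair, Matrix.rank, range_eq]
  refine ⟨fun h ↦ Submodule.eq_top_of_finrank_eq (by rw [h, Module.finrank_fin_fun]),
    fun h ↦ by rw [h, finrank_top, Module.finrank_fin_fun]⟩

lemma isReachablePair_iff_surjective_noiseMap {n m : ℕ} (A : Matrix (Fin n) (Fin n) ℝ)
    (B : Matrix (Fin n) (Fin m) ℝ) {t : ℕ} (ht : n ≤ t) :
    IsReachablePair A B ↔ Function.Surjective (noiseMap A B t) := by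
  rw [isReachablePair_iff_reachableSubspace_eq_top, ← LinearMap.range_eq_top, range_noiseMap,
    reachableSubspace_eq_of_card_le A B ((Fintype.card_fin n).trans_le ht), Fintype.card_fin]

end Reachability

section Steering

variable {E F W : Type*} [NormedAddCommGroup E] [NormedSpace ℝ E] [NormedAddCommGroup F]
  [NormedSpace ℝ F] [NormedAddCommGroup W] [NormedSpace ℝ W]

/-- The linear map which changes the noise `w` by `S (y - (L x + G w))`. When `S` is a right inverse
of `G`, the corrected noise steers `x` to the target `y`. -/
noncomputable def steeringMap (L : E →L[ℝ] F) (G : W →L[ℝ] F) (S : F →L[ℝ] W) :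
    E × F × W →L[ℝ] E × W :=
  let x : E × F × W →L[ℝ] E := .fst ℝ E (F × W)
  let y : E × F × W →L[ℝ] F := .fst ℝ F W ∘L .snd ℝ E (F × W)
  let w : E × F × W →L[ℝ] W := .snd ℝ F W ∘L .snd ℝ E (F × W)
  x.prod (w + S ∘L (y - (L ∘L x + G ∘L w)))

lemma steeringMap_apply (L : E →L[ℝ] F) (G : W →L[ℝ] F) (S : F →L[ℝ] W) (x : E) (y : F) (w : W) :
    steeringMap L G S (x, y, w) = (x, w + S (y - (L x + G w))) := rfl

lemma surjective_steeringMap (L : E →L[ℝ] F) (G : W →L[ℝ] F) (S : F →L[ℝ] W) :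
    Function.Surjective (steeringMap L G S) := fun ⟨x, w⟩ ↦
  ⟨(x, L x + G w, w), by rw [steeringMap_apply, sub_self, map_zero, add_zero]⟩

lemma add_comp_steeringMap (L : E →L[ℝ] F) {G : W →L[ℝ] F} {S : F →L[ℝ] W}
    (hS : G ∘L S = .id ℝ F) :
    (fun p ↦ L p.1 + G p.2) ∘ steeringMap L G S = fun q ↦ q.2.1 := by
  funext ⟨x, y, w⟩
  have hGS (z : F) : G (S z) = z := DFunLike.congr_fun hS z
  simp only [Function.comp_apply, steeringMap_apply, map_add, hGS]
  abel

variable [MeasurableSpace E] [BorelSpace E] [MeasurableSpace F] [BorelSpace F]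
  [MeasurableSpace W] [BorelSpace W]

lemma map_absolutelyContinuous_of_surjective [FiniteDimensional ℝ E] {T : E →L[ℝ] F}
    (hT : Function.Surjective T) {μ lE : Measure E} {lF : Measure F} [lE.IsAddHaarMeasure]
    [lF.IsAddHaarMeasure] (hμ : μ ≪ lE) : μ.map T ≪ lF := by
  obtain ⟨c, -, hc⟩ := T.toLinearMap.exists_map_addHaar_eq_smul_addHaar lE lF hT
  have hlE : lE.map T ≪ lF := hc ▸ Measure.smul_absolutelyContinuous
  exact (hμ.map T.measurable).trans hlE

theorem exists_isGaussian_map_add_eq [FiniteDimensional ℝ E] [FiniteDimensional ℝ W]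
    (L : E →L[ℝ] F) {G : W →L[ℝ] F} (hG : Function.Surjective G)
    {μ lE : Measure E} {ν lF : Measure F} {ρ lW : Measure W}
    [IsGaussian μ] [IsGaussian ν] [IsGaussian ρ]
    [lE.IsAddHaarMeasure] [lF.IsAddHaarMeasure] [lW.IsAddHaarMeasure]
    (hμ : μ ≪ lE) (hμ' : lE ≪ μ) (hν : ν ≪ lF) (hρ : ρ ≪ lW) (hρ' : lW ≪ ρ) :
    ∃ Q : Measure (E × W), IsGaussian Q ∧ Q.fst = μ ∧ Q ≪ μ.prod ρ ∧
      Q.map (fun p ↦ L p.1 + G p.2) = ν := by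
  have : FiniteDimensional ℝ F := .of_surjective G.toLinearMap hG
  have := FiniteDimensional.proper ℝ W
  obtain ⟨S, hS⟩ := G.exists_rightInverse_of_surjective (LinearMap.range_eq_top.mpr hG)
  set T := steeringMap L G S
  refine ⟨(μ.prod (ν.prod ρ)).map T, inferInstance, ?_, ?_, ?_⟩
  · rw [Measure.fst, Measure.map_map measurable_fst T.measurable]
    exact measurePreserving_fst.map_eq
  · have : (lE.prod lW).IsAddHaarMeasure := Measure.prod.instIsAddHaarMeasure _ _
    have : (lE.prod (lF.prod lW)).IsAddHaarMeasure := Measure.prod.instIsAddHaarMeasure _ _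
    have hT := map_absolutelyContinuous_of_surjective (lF := lE.prod lW)
      (surjective_steeringMap L G S) (hμ.prod (hν.prod hρ))
    exact hT.trans (hμ'.prod hρ')
  · have hsum : Measurable fun p : E × W ↦ L p.1 + G p.2 := Continuous.measurable (by fun_prop)
    rw [Measure.map_map hsum T.measurable, add_comp_steeringMap L hS]
    exact (measurePreserving_fst.comp measurePreserving_snd).map_eq

lemma integral_id_map_add [CompleteSpace E] [CompleteSpace F] [CompleteSpace W]
    [SecondCountableTopology E] [SecondCountableTopology F] [SecondCountableTopology W]
    (L : E →L[ℝ] F) (G : W →L[ℝ] F) {Q : Measure (E × W)} (hQ : Integrable id Q) :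
    ∫ y, y ∂Q.map (fun p ↦ L p.1 + G p.2) = L (∫ x, x ∂Q.fst) + G (∫ w, w ∂Q.snd) := by
  have hx : Integrable (fun p ↦ p.1) Q := hQ.fst
  have hw : Integrable (fun p ↦ p.2) Q := hQ.snd
  calc ∫ y, y ∂Q.map (fun p ↦ L p.1 + G p.2)
      = ∫ p, (L p.1 + G p.2) ∂Q :=
        integral_map (Continuous.aemeasurable (by fun_prop)) aestronglyMeasurable_id
    _ = L (∫ p, p.1 ∂Q) + G (∫ p, p.2 ∂Q) := by
        rw [integral_add (L.integrable_comp hx) (G.integrable_comp hw),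
          L.integral_comp_comm hx, G.integral_comp_comm hw]
    _ = L (∫ x, x ∂Q.fst) + G (∫ w, w ∂Q.snd) := by
        rw [Measure.fst, Measure.snd,
          integral_map (f := fun x ↦ x) measurable_fst.aemeasurable aestronglyMeasurable_id,
          integral_map (f := fun w ↦ w) measurable_snd.aemeasurable aestronglyMeasurable_id]

end Steering

/-- Reachability of Gaussian state distributions for the linear system
`X_{k+1} = A X_k + B W_k` with nominal noise `N(0, I_m)`, over a time horizon `t ≥ n`:
`(A, B)` is reachable iff every nonsingular Gaussian terminal state distribution `N(β, Θ)` can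
be reached from every nonsingular Gaussian initial state distribution `N(α, Σ)` by an
admissible jointly Gaussian noise strategy. -/
theorem gaussian_state_distribution_reachability
    {n m : ℕ} (A : Matrix (Fin n) (Fin n) ℝ) (B : Matrix (Fin n) (Fin m) ℝ)
    (t : ℕ) (ht : n ≤ t) :
    IsReachablePair A B ↔
      ∀ (α β : Fin n → ℝ) (Sig Th : Matrix (Fin n) (Fin n) ℝ),
        Sig.PosDef → Th.PosDef →
        ∃ Q : Measure ((Fin n → ℝ) × (Fin t → Fin m → ℝ)),
          IsProbabilityMeasure Q ∧
          IsGaussianMeasure Q ∧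
          Q.fst = gaussianPi α Sig ∧
          Q ≪ (gaussianPi α Sig).prod
            (Measure.pi fun _ : Fin t => gaussianPi (0 : Fin m → ℝ) 1) ∧
          Q.map (fun p => (A ^ t) *ᵥ p.1
              + ∑ s : Fin t, ((A ^ (t - 1 - (s : ℕ))) * B) *ᵥ p.2 s)
            = gaussianPi β Th := by
  rw [isReachablePair_iff_surjective_noiseMap A B ht]
  simp_rw [← noiseMap_apply, isGaussianMeasure_iff_isGaussian]
  let L := (A ^ t).mulVecLin.toContinuousLinearMap
  let G := (noiseMap A B t).toContinuousLinearMap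
  refine ⟨fun hG α β Sig Th hSig hTh ↦ ?_, fun h β ↦ ?_⟩
  · have := isGaussian_gaussianPi α hSig
    have := isGaussian_gaussianPi β hTh
    have := isGaussian_gaussianPi (0 : Fin m → ℝ) PosDef.one
    have := isGaussian_pi fun _ : Fin t ↦ gaussianPi (0 : Fin m → ℝ) 1
    obtain ⟨Q, hQ, hfst, hac, hmap⟩ := exists_isGaussian_map_add_eq L (G := G) hG
      (gaussianPi_absolutelyContinuous_volume α Sig)
      (volume_absolutelyContinuous_gaussianPi α hSig.det_pos)
      (gaussianPi_absolutelyContinuous_volume β Th)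
      (absolutelyContinuous_pi fun _ : Fin t ↦ gaussianPi_absolutelyContinuous_volume 0 1)
      (absolutelyContinuous_pi fun _ ↦ volume_absolutelyContinuous_gaussianPi 0 PosDef.one.det_pos)
    exact ⟨Q, inferInstance, hQ, hfst, hac, hmap⟩
  · obtain ⟨Q, _, _, hfst, -, hmap⟩ := h 0 β 1 1 PosDef.one PosDef.one
    have terminal_mean := integral_id_map_add L G (IsGaussian.integrable_id (μ := Q))
    rw [hfst, integral_id_gaussianPi 0 PosDef.one, map_zero, zero_add] at terminal_mean
    refine ⟨∫ w, w ∂Q.snd, terminal_mean.symm.trans ?_⟩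
    exact (congrArg (fun P ↦ ∫ y, y ∂P) hmap).trans (integral_id_gaussianPi β PosDef.one)
end

section
/- Let U and V be real symmetric n×n matrices with U positive semidefinite and V positive definite. Then the algebraic Riccati equation Σ + Σ U Σ = V has a unique symmetric positive definite solution Σ, and this solution is given in closed form by Σ = 2 √V ( I_n + √( I_n + 4 √V U √V ) )⁻¹ √V, where √M denotes the unique positive semidefinite symmetric square root of a positive semidefinite symmetric matrix M. -/
/-!
Two nonnegative solutions `s`, `t` of the Riccati equation `s + s u s = v` coincide: their
difference `d` satisfies the Sylvester equation `d + (s u) d + d (u t) = 0`. Writing `u = r ^ 2`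
with `r` self-adjoint, `e = r d r` satisfies `e + p e + e q = 0` with `p = r s r` and `q = r t r`
nonnegative. Then `p e ^ 2 = -(e ^ 2 + e q e)` is self-adjoint, so `p` commutes with `e ^ 2` and
`p e ^ 2` is nonnegative; hence `e ^ 2 ≤ 0` and `e = 0`, which propagates to `r d = 0` and `d = 0`.
It then suffices to check that the closed form is a nonnegative solution.
-/

open Matrix

section Algebra

open scoped Ring

variable {A : Type*} [Ring A] [StarRing A] [Algebra ℝ A]

theorem eq_zero_of_isSelfAdjoint_of_mul_self_eq_zero [TopologicalSpace A]
    [ContinuousFunctionalCalculus ℝ A IsSelfAdjoint] {a : A} (ha : IsSelfAdjoint a)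
    (h : a * a = 0) : a = 0 := by
  nontriviality A
  refine CFC.eq_zero_of_spectrum_subset_zero (R := ℝ) a fun x hx => ?_
  have hx_sq := spectrum.pow_mem_pow a 2 hx
  rw [pow_two a, h, spectrum.zero_eq] at hx_sq
  exact (pow_eq_zero_iff two_ne_zero).1 hx_sq

/-- The closed form `2 a (1 + w)⁻¹ a*` of the solution of the Riccati equation
`s + s u s = a a*`; `w` stands for the square root of `1 + 4 a* u a`. The inverse is
`Ring.inverse`, a genuine inverse whenever `w` is nonnegative. -/
noncomputable def riccatiSolution (a w : A) : A := (2 : ℝ) • (a * (1 + w)⁻¹ʳ * star a)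

variable [PartialOrder A] [StarOrderedRing A] [NonnegSpectrumClass ℝ A]

theorem isStrictlyPositive_one_add_of_nonneg {a : A} (ha : 0 ≤ a) : IsStrictlyPositive (1 + a) := by
  have hunit : IsUnit (1 + a) := by
    have hspec : (-1 : ℝ) ∉ spectrum ℝ a := fun h => by
      linarith [spectrum_nonneg_of_nonneg ha h]
    rw [spectrum.notMem_iff, map_neg, map_one, ← neg_add'] at hspec
    exact (IsUnit.neg_iff _).1 hspec
  exact hunit.isStrictlyPositive (add_nonneg zero_le_one ha)

theorem add_riccatiSolution_mul_mul_self {u a w : A} (hw : 0 ≤ w)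
    (hww : w * w = 1 + (4 : ℝ) • (star a * u * a)) :
    riccatiSolution a w + riccatiSolution a w * u * riccatiSolution a w = a * star a := by
  have hunit := (isStrictlyPositive_one_add_of_nonneg hw).isUnit
  have hright := Ring.mul_inverse_cancel _ hunit
  have hleft := Ring.inverse_mul_cancel _ hunit
  unfold riccatiSolution
  set k := (1 + w)⁻¹ʳ
  have hfactor : (4 : ℝ) • (star a * u * a) = (1 + w) * (w - 1) := by
    linear_combination (norm := noncomm_ring) -hww
  calc (2 : ℝ) • (a * k * star a) + (2 : ℝ) • (a * k * star a) * u * (2 : ℝ) • (a * k * star a)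
      = a * ((2 : ℝ) • k + k * ((4 : ℝ) • (star a * u * a)) * k) * star a := by
        simp only [smul_mul_assoc, mul_smul_comm, smul_smul, mul_add, add_mul, mul_assoc]
        norm_num
    _ = a * ((2 : ℝ) • k + (k * (1 + w)) * (w - 1) * k) * star a := by
        rw [hfactor]; simp only [mul_assoc]
    _ = a * ((1 + w) * k) * star a := by
        rw [hleft, two_smul]; noncomm_ring
    _ = a * star a := by rw [hright, mul_one]

variable [TopologicalSpace A] [ContinuousFunctionalCalculus ℝ A IsSelfAdjoint]

theorem eq_zero_of_add_mul_add_mul_eq_zero {p q e : A} (hp : 0 ≤ p) (hq : 0 ≤ q)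
    (he : IsSelfAdjoint e) (h : e + p * e + e * q = 0) : e = 0 := by
  have hee : 0 ≤ e * e := he.mul_self_nonneg
  have heqe : 0 ≤ e * q * e := he.conjugate_nonneg hq
  have hsum : e * e + e * q * e + p * (e * e) = 0 := by
    linear_combination (norm := noncomm_ring) congr($h * e)
  have hpee : 0 ≤ p * (e * e) := by
    have hsa : IsSelfAdjoint (p * (e * e)) := by
      rw [eq_neg_of_add_eq_zero_right hsum]
      exact (add_nonneg hee heqe).isSelfAdjoint.neg
    exact Commute.mul_nonneg hp hee ((hp.isSelfAdjoint.commute_iff hee.isSelfAdjoint).2 hsa)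
  have hee_add : e * e + e * q * e = 0 :=
    ((add_eq_zero_iff_of_nonneg (add_nonneg hee heqe) hpee).1 hsum).1
  have hee_zero : e * e = 0 := ((add_eq_zero_iff_of_nonneg hee heqe).1 hee_add).1
  exact eq_zero_of_isSelfAdjoint_of_mul_self_eq_zero he hee_zero

theorem injOn_add_mul_mul_self {u : A} (hu : 0 ≤ u) :
    Set.InjOn (fun s => s + s * u * s) (Set.Ici 0) := by
  intro s (hs : 0 ≤ s) t (ht : 0 ≤ t) (hst : s + s * u * s = t + t * u * t)
  obtain ⟨r, hr, -, rfl⟩ := CFC.exists_sqrt_of_isSelfAdjoint_of_quasispectrumRestricts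
    hu.isSelfAdjoint (.nnreal_of_nonneg hu)
  set d := s - t with hd
  have hd_sa : IsSelfAdjoint d := hs.isSelfAdjoint.sub ht.isSelfAdjoint
  have hsylvester : d + s * r * (r * d) + d * r * (r * t) = 0 := by
    linear_combination (norm := (rw [hd]; noncomm_ring)) hst
  have hrsr : 0 ≤ r * s * r := hr.conjugate_nonneg hs
  have hrdr : r * d * r = 0 :=
    eq_zero_of_add_mul_add_mul_eq_zero hrsr (hr.conjugate_nonneg ht) (hd_sa.conjugate_self hr)
      (by linear_combination (norm := noncomm_ring) congr(r * $hsylvester * r))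
  have hrd : r * d = 0 := by
    refine (isStrictlyPositive_one_add_of_nonneg hrsr).isUnit.mul_right_eq_zero.1 ?_
    linear_combination (norm := noncomm_ring) congr(r * $hsylvester) - congr($hrdr * (r * t))
  have hdr : d * r = 0 := by simpa [hr.star_eq, hd_sa.star_eq] using congr(star $hrd)
  have hd_zero : d = 0 := by simpa [hrd, hdr] using hsylvester
  exact sub_eq_zero.1 hd_zero

theorem riccatiSolution_nonneg {w : A} (a : A) (hw : 0 ≤ w) : 0 ≤ riccatiSolution a w := by
  have hinv : 0 ≤ (1 + w)⁻¹ʳ := (isStrictlyPositive_one_add_of_nonneg hw).ringInverse.nonneg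
  have hconj := star_right_conjugate_nonneg hinv a
  rw [riccatiSolution, two_smul]
  exact add_nonneg hconj hconj

theorem riccati_closed_form_general {u a w s : A} (hu : 0 ≤ u) (hw : 0 ≤ w)
    (hww : w * w = 1 + (4 : ℝ) • (star a * u * a)) :
    0 ≤ s ∧ s + s * u * s = a * star a ↔ s = (2 : ℝ) • (a * (1 + w)⁻¹ʳ * star a) := by
  have hnonneg := riccatiSolution_nonneg a hw
  have hsol := add_riccatiSolution_mul_mul_self hw hww
  constructor
  · rintro ⟨hs, h⟩
    exact injOn_add_mul_mul_self hu hs hnonneg (h.trans hsol.symm)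
  · rintro rfl
    exact ⟨hnonneg, hsol⟩

end Algebra

open scoped ComplexOrder MatrixOrder in
theorem posDef_and_riccati_iff {𝕜 n : Type*} [RCLike 𝕜] [Fintype n] [DecidableEq n]
    {U B W S : Matrix n n 𝕜} (hU : U.PosSemidef) (hB : IsUnit B) (hW : W.PosSemidef)
    (hWW : W * W = 1 + (4 : ℝ) • (Bᴴ * U * B)) :
    S.PosDef ∧ S + S * U * S = B * Bᴴ ↔ S = (2 : ℝ) • (B * (1 + W)⁻¹ * Bᴴ) := by
  have hgeneral := riccati_closed_form_general (s := S) hU.nonneg hW.nonneg hWW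
  rw [star_eq_conjTranspose, nonneg_iff_posSemidef, ← nonsing_inv_eq_ringInverse] at hgeneral
  rw [← hgeneral]
  refine and_congr_left fun h => ⟨PosDef.posSemidef, fun hS => hS.posDef_iff_isUnit.2 ?_⟩
  have hfactor : S * (1 + U * S) = B * Bᴴ := by rw [← h, mul_add, mul_one, mul_assoc]
  exact isUnit_of_mul_isUnit_left (hfactor ▸ hB.mul hB.star)

/-- The algebraic Riccati equation `Σ + Σ U Σ = V`, with `U` positive semidefinite and `V`
positive definite, has a unique positive definite symmetric solution, given in closed form by
`Σ = 2 √V (I + √(I + 4 √V U √V))⁻¹ √V`.  Here `sV` is the (unique) positive semidefinite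
symmetric square root of `V`, and `W` that of `I + 4 √V U √V`. -/
theorem riccati_closed_form
    {n : ℕ} (U V : Matrix (Fin n) (Fin n) ℝ) (hU : U.PosSemidef) (hV : V.PosDef)
    (sV : Matrix (Fin n) (Fin n) ℝ) (hsV : sV.PosSemidef ∧ sV * sV = V)
    (W : Matrix (Fin n) (Fin n) ℝ)
    (hW : W.PosSemidef ∧ W * W = 1 + (4 : ℝ) • (sV * U * sV)) :
    (∃! S : Matrix (Fin n) (Fin n) ℝ, S.PosDef ∧ S + S * U * S = V) ∧
    ∀ S : Matrix (Fin n) (Fin n) ℝ, S.PosDef → S + S * U * S = V →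
      S = (2 : ℝ) • (sV * (1 + W)⁻¹ * sV) := by
  obtain ⟨hs, rfl⟩ := hsV
  have hunit : IsUnit sV := isUnit_of_mul_isUnit_left hV.isUnit
  have hiff (S : Matrix (Fin n) (Fin n) ℝ) :
      S.PosDef ∧ S + S * U * S = sV * sV ↔ S = (2 : ℝ) • (sV * (1 + W)⁻¹ * sV) := by
    have hstar : sVᴴ = sV := hs.isHermitian
    simpa only [hstar] using posDef_and_riccati_iff hU hunit hW.1 (hstar.symm ▸ hW.2)
  exact ⟨⟨_, (hiff _).2 rfl, fun S => (hiff S).1⟩, fun S hS hSV => (hiff S).1 ⟨hS, hSV⟩⟩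
end
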